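/- arXiv:2012.05485 — 3 statements merged into one kernel-verified Lean document; each statement's English description precedes it below -/
import Mathlib

section
/- Let ABC be a triangle, P any point, and let A_P, B_P, C_P, A', B', C', A1, A2, B1, B2, C1, C2 be as in the pedal configuration for a parameter x > 0, with A', B', C' affinely independent and orthocenter H'. Suppose Q1 is a point whose reflections in lines B'C', C'A', A'B' are A1, B1, C1 respectively, and Q2 is a point whose reflections in lines B'C', C'A', A'B' are A2, B2, C2 respectively. Then dist(H',Q1) = dist(H',Q2). -/
open EuclideanGeometry

noncomputable section

/-- The Euclidean plane. -/
abbrev Pt := EuclideanSpace ℝ (Fin 2)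

/-- The pedal (orthogonal projection) of `P` on the line `XY` (the affine span of `{X, Y}`). -/
def pedal (P X Y : Pt) : Pt :=
  EuclideanGeometry.orthogonalProjection (affineSpan ℝ {X, Y}) P

/-- The reflection of `P` in the line `XY` (the affine span of `{X, Y}`). -/
def lineReflect (X Y P : Pt) : Pt :=
  EuclideanGeometry.reflection (affineSpan ℝ {X, Y}) P

/-- The circumcenter of the triangle `ABC`. -/
def circumcenter3 (A B C : Pt) (h : AffineIndependent ℝ ![A, B, C]) : Pt :=
  (⟨![A, B, C], h⟩ : Affine.Triangle ℝ Pt).circumcenter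

/-- The circumradius of the triangle `ABC`. -/
def circumradius3 (A B C : Pt) (h : AffineIndependent ℝ ![A, B, C]) : ℝ :=
  (⟨![A, B, C], h⟩ : Affine.Triangle ℝ Pt).circumradius

/-- The orthocenter of the triangle `ABC`. -/
def orthocenter3 (A B C : Pt) (h : AffineIndependent ℝ ![A, B, C]) : Pt :=
  Affine.Triangle.orthocenter (⟨![A, B, C], h⟩ : Affine.Triangle ℝ Pt)

/-- The incenter of the triangle `ABC`: `(a•A + b•B + c•C)/(a+b+c)` with
`a = dist B C`, `b = dist C A`, `c = dist A B`. -/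
def incenter3 (A B C : Pt) : Pt :=
  (dist B C + dist C A + dist A B)⁻¹ •
    (dist B C • A + dist C A • B + dist A B • C)

/-- The centroid of the triangle `ABC`. -/
def centroid3 (A B C : Pt) : Pt := (3 : ℝ)⁻¹ • (A + B + C)

/-- The Nagel point of the triangle `ABC`:
`((s−a)/s)•A + ((s−b)/s)•B + ((s−c)/s)•C` with `s` the semiperimeter. -/
def nagelPoint (A B C : Pt) : Pt :=
  (((dist B C + dist C A + dist A B) / 2 - dist B C) /
      ((dist B C + dist C A + dist A B) / 2)) • A +
    (((dist B C + dist C A + dist A B) / 2 - dist C A) /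
      ((dist B C + dist C A + dist A B) / 2)) • B +
    (((dist B C + dist C A + dist A B) / 2 - dist A B) /
      ((dist B C + dist C A + dist A B) / 2)) • C

theorem projf {b1 b2 c1 c2 p1 p2 z1 z2 t : ℝ} (hb : b1^2+b2^2=1) (hc : c1^2+c2^2=1)
  (hne : b1*c2-b2*c1 ≠ 0) (h1 : z1 = t*(b1-c1)) (h2 : z2 = t*(b2-c2))
  (h : (p1-z1)*(b1-c1)+(p2-z2)*(b2-c2)=0) :
  2*z1 = p1 - ((b1*c1-b2*c2)*p1+(b1*c2+b2*c1)*p2) ∧ 2*z2 = p2 - ((b1*c2+b2*c1)*p1-(b1*c1-b2*c2)*p2) := by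
  have hn : (b1-c1)^2+(b2-c2)^2 ≠ 0 := by
    intro h0
    have e1 : b1 - c1 = 0 := by nlinarith [sq_nonneg (b1-c1), sq_nonneg (b2-c2)]
    have e2 : b2 - c2 = 0 := by nlinarith [sq_nonneg (b1-c1), sq_nonneg (b2-c2)]
    apply hne; linear_combination c2*e1 - c1*e2
  have ht : t*((b1-c1)^2+(b2-c2)^2) = p1*(b1-c1)+p2*(b2-c2) := by
    subst h1 h2; linarith
  constructor
  · apply mul_left_cancel₀ hn
    subst h1 h2
    grind
  · apply mul_left_cancel₀ hn
    subst h1 h2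
    grind

-- coordinates relative to I; x = A', y = B', z = C', h = H'
theorem orthf {a1 a2 b1 b2 c1 c2 p1 p2 x1 x2 y1 y2 z1 z2 h1 h2 : ℝ} (ha : a1^2+a2^2=1)
  (hb : b1^2+b2^2=1) (hc : c1^2+c2^2=1)
  (hx1 : 2*x1 = p1 - ((b1*c1-b2*c2)*p1+(b1*c2+b2*c1)*p2))
  (hx2 : 2*x2 = p2 - ((b1*c2+b2*c1)*p1-(b1*c1-b2*c2)*p2))
  (hy1 : 2*y1 = p1 - ((a1*c1-a2*c2)*p1+(a1*c2+a2*c1)*p2))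
  (hy2 : 2*y2 = p2 - ((a1*c2+a2*c1)*p1-(a1*c1-a2*c2)*p2))
  (hz1 : 2*z1 = p1 - ((a1*b1-a2*b2)*p1+(a1*b2+a2*b1)*p2))
  (hz2 : 2*z2 = p2 - ((a1*b2+a2*b1)*p1-(a1*b1-a2*b2)*p2))
  (hne : (x1-z1)*(y2-z2)-(x2-z2)*(y1-z1) ≠ 0)
  (hh1 : (h1-x1)*(y1-z1)+(h2-x2)*(y2-z2)=0)
  (hh2 : (h1-y1)*(x1-z1)+(h2-y2)*(x2-z2)=0) :
  h1 = x1+y1+z1-p1 ∧ h2 = x2+y2+z2-p2 := by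
  have k1 : (x1+y1+z1-p1-x1)*(y1-z1)+(x2+y2+z2-p2-x2)*(y2-z2)=0 := by
    obtain rfl : y1 = (p1 - ((a1*c1-a2*c2)*p1+(a1*c2+a2*c1)*p2))/2 := by linarith
    obtain rfl : y2 = (p2 - ((a1*c2+a2*c1)*p1-(a1*c1-a2*c2)*p2))/2 := by linarith
    obtain rfl : z1 = (p1 - ((a1*b1-a2*b2)*p1+(a1*b2+a2*b1)*p2))/2 := by linarith
    obtain rfl : z2 = (p2 - ((a1*b2+a2*b1)*p1-(a1*b1-a2*b2)*p2))/2 := by linarith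
    clear hh1 hh2 hne hx1 hx2 hy1 hy2 hz1 hz2
    grind
  have k2 : (x1+y1+z1-p1-y1)*(x1-z1)+(x2+y2+z2-p2-y2)*(x2-z2)=0 := by
    obtain rfl : x1 = (p1 - ((b1*c1-b2*c2)*p1+(b1*c2+b2*c1)*p2))/2 := by linarith
    obtain rfl : x2 = (p2 - ((b1*c2+b2*c1)*p1-(b1*c1-b2*c2)*p2))/2 := by linarith
    obtain rfl : z1 = (p1 - ((a1*b1-a2*b2)*p1+(a1*b2+a2*b1)*p2))/2 := by linarith
    obtain rfl : z2 = (p2 - ((a1*b2+a2*b1)*p1-(a1*b1-a2*b2)*p2))/2 := by linarith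
    clear hh1 hh2 hne hx1 hx2 hy1 hy2 hz1 hz2
    grind
  constructor
  · apply mul_left_cancel₀ hne
    linear_combination (x2-z2)*(k1-hh1) - (y2-z2)*(k2-hh2)
  · apply mul_left_cancel₀ hne
    linear_combination -(x1-z1)*(k1-hh1) + (y1-z1)*(k2-hh2)

theorem reflf {a1 a2 b1 b2 c1 c2 p1 p2 x1 x2 y1 y2 z1 z2 h1 h2 k1 k2 : ℝ} (ha : a1^2+a2^2=1)
  (hb : b1^2+b2^2=1) (hc : c1^2+c2^2=1)
  (hx1 : 2*x1 = p1 - ((b1*c1-b2*c2)*p1+(b1*c2+b2*c1)*p2))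
  (hx2 : 2*x2 = p2 - ((b1*c2+b2*c1)*p1-(b1*c1-b2*c2)*p2))
  (hy1 : 2*y1 = p1 - ((a1*c1-a2*c2)*p1+(a1*c2+a2*c1)*p2))
  (hy2 : 2*y2 = p2 - ((a1*c2+a2*c1)*p1-(a1*c1-a2*c2)*p2))
  (hz1 : 2*z1 = p1 - ((a1*b1-a2*b2)*p1+(a1*b2+a2*b1)*p2))
  (hz2 : 2*z2 = p2 - ((a1*b2+a2*b1)*p1-(a1*b1-a2*b2)*p2))
  (hne : (y1-z1)^2+(y2-z2)^2 ≠ 0)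
  (hh1 : h1 = x1+y1+z1-p1) (hh2 : h2 = x2+y2+z2-p2)
  (hk1 : (k1-h1)*(y1-z1)+(k2-h2)*(y2-z2)=0)
  (hk2 : (k1+h1-2*y1)*(y2-z2)-(k2+h2-2*y2)*(y1-z1)=0) :
  (k1-p1)*a1+(k2-p2)*a2=0 := by
  obtain ⟨q1, hq1⟩ : ∃ q, q = (a1*p1+a2*p2)*a1 := ⟨_, rfl⟩
  obtain ⟨q2, hq2⟩ : ∃ q, q = (a1*p1+a2*p2)*a2 := ⟨_, rfl⟩
  have e1 : (q1-h1)*(y1-z1)+(q2-h2)*(y2-z2)=0 := by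
    subst hh1 hh2 hq1 hq2
    clear hk1 hk2 hne
    obtain rfl : x1 = (p1 - ((b1*c1-b2*c2)*p1+(b1*c2+b2*c1)*p2))/2 := by linarith
    obtain rfl : x2 = (p2 - ((b1*c2+b2*c1)*p1-(b1*c1-b2*c2)*p2))/2 := by linarith
    obtain rfl : y1 = (p1 - ((a1*c1-a2*c2)*p1+(a1*c2+a2*c1)*p2))/2 := by linarith
    obtain rfl : y2 = (p2 - ((a1*c2+a2*c1)*p1-(a1*c1-a2*c2)*p2))/2 := by linarith
    obtain rfl : z1 = (p1 - ((a1*b1-a2*b2)*p1+(a1*b2+a2*b1)*p2))/2 := by linarith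
    obtain rfl : z2 = (p2 - ((a1*b2+a2*b1)*p1-(a1*b1-a2*b2)*p2))/2 := by linarith
    clear hx1 hx2 hy1 hy2 hz1 hz2
    grind
  have e2 : (q1+h1-2*y1)*(y2-z2)-(q2+h2-2*y2)*(y1-z1)=0 := by
    subst hh1 hh2 hq1 hq2
    clear hk1 hk2 hne
    obtain rfl : x1 = (p1 - ((b1*c1-b2*c2)*p1+(b1*c2+b2*c1)*p2))/2 := by linarith
    obtain rfl : x2 = (p2 - ((b1*c2+b2*c1)*p1-(b1*c1-b2*c2)*p2))/2 := by linarith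
    obtain rfl : y1 = (p1 - ((a1*c1-a2*c2)*p1+(a1*c2+a2*c1)*p2))/2 := by linarith
    obtain rfl : y2 = (p2 - ((a1*c2+a2*c1)*p1-(a1*c1-a2*c2)*p2))/2 := by linarith
    obtain rfl : z1 = (p1 - ((a1*b1-a2*b2)*p1+(a1*b2+a2*b1)*p2))/2 := by linarith
    obtain rfl : z2 = (p2 - ((a1*b2+a2*b1)*p1-(a1*b1-a2*b2)*p2))/2 := by linarith
    clear hx1 hx2 hy1 hy2 hz1 hz2
    grind
  have f1 : k1 = q1 := by
    apply mul_left_cancel₀ hne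
    linear_combination (y1-z1)*(hk1-e1) + (y2-z2)*(hk2-e2)
  have f2 : k2 = q2 := by
    apply mul_left_cancel₀ hne
    linear_combination (y2-z2)*(hk1-e1) - (y1-z1)*(hk2-e2)
  rw [f1, f2, hq1, hq2]
  linear_combination (a1*p1+a2*p2)*ha

theorem footf {b1 b2 c1 c2 p1 p2 z1 z2 v1 v2 i1 i2 m s t : ℝ} (hb : b1^2+b2^2=1)
  (hc : c1^2+c2^2=1)
  (hne : b1*c2-b2*c1 ≠ 0) (hm : m ≠ 0) (hs : s ≠ 0)
  (hv1 : s*(v1 - i1) = m*(b1-c1)) (hv2 : s*(v2 - i2) = m*(b2-c2))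
  (h1 : z1 = v1 + t*(i1-v1)) (h2 : z2 = v2 + t*(i2-v2))
  (h : (p1-z1)*(i1-v1)+(p2-z2)*(i2-v2)=0) :
  2*(z1-i1) = (p1-i1) - ((b1*c1-b2*c2)*(p1-i1)+(b1*c2+b2*c1)*(p2-i2)) ∧
  2*(z2-i2) = (p2-i2) - ((b1*c2+b2*c1)*(p1-i1)-(b1*c1-b2*c2)*(p2-i2)) := by
  apply projf (t := (1-t)*m/s) hb hc hne
  · field_simp
    linear_combination s*h1 + (1-t)*hv1
  · field_simp
    linear_combination s*h2 + (1-t)*hv2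
  · apply mul_left_cancel₀ hm
    linear_combination (-s)*h - (p1-z1)*hv1 - (p2-z2)*hv2

theorem indep_cross {A B C : Pt} (h : AffineIndependent ℝ ![A, B, C]) :
    (A 0 - C 0)*(B 1 - C 1) - (A 1 - C 1)*(B 0 - C 0) ≠ 0 := by
  intro h0
  apply (affineIndependent_iff_not_collinear_set.1 h)
  rw [collinear_iff_of_mem (p₀ := C) (by simp)]
  by_cases hA : A = C
  · refine ⟨B - C, ?_⟩
    intro p hp
    rcases hp with rfl | rfl | rfl
    · exact ⟨0, by simp [hA]⟩
    · exact ⟨1, by simp⟩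
    · exact ⟨0, by simp⟩
  · refine ⟨A - C, ?_⟩
    have hn : (A 0 - C 0)^2 + (A 1 - C 1)^2 ≠ 0 := by
      intro h1
      apply hA
      ext i
      fin_cases i
      · show A 0 = C 0
        nlinarith [sq_nonneg (A 0 - C 0), sq_nonneg (A 1 - C 1)]
      · show A 1 = C 1
        nlinarith [sq_nonneg (A 0 - C 0), sq_nonneg (A 1 - C 1)]
    intro p hp
    rcases hp with rfl | rfl | rfl
    · exact ⟨1, by simp⟩
    · refine ⟨((A 0 - C 0)*(p 0 - C 0) + (A 1 - C 1)*(p 1 - C 1))/((A 0 - C 0)^2 + (A 1 - C 1)^2), ?_⟩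
      ext i
      fin_cases i
      · simp
        field_simp
        linear_combination (-(A 1 - C 1))*h0
      · simp
        field_simp
        linear_combination (A 0 - C 0)*h0
    · exact ⟨0, by simp⟩

theorem pedal_spec (P X Y : Pt) : ∃ t : ℝ, (pedal P X Y) 0 = X 0 + t*(Y 0 - X 0) ∧
    (pedal P X Y) 1 = X 1 + t*(Y 1 - X 1) ∧
    (P 0 - pedal P X Y 0)*(Y 0 - X 0) + (P 1 - pedal P X Y 1)*(Y 1 - X 1) = 0 := by
  have h1 : pedal P X Y ∈ line[ℝ, X, Y] := orthogonalProjection_mem P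
  have h2 : P -ᵥ pedal P X Y ∈ (line[ℝ, X, Y]).directionᗮ :=
    vsub_orthogonalProjection_mem_direction_orthogonal _ _
  obtain ⟨t, ht⟩ := mem_affineSpan_pair_iff_exists_lineMap_eq.1 h1
  refine ⟨t, ?_, ?_, ?_⟩
  · rw [← ht]; simp [AffineMap.lineMap_apply]; ring
  · rw [← ht]; simp [AffineMap.lineMap_apply]; ring
  · have := (Submodule.mem_orthogonal _ _).1 h2 (Y -ᵥ X)
      (AffineSubspace.vsub_mem_direction (right_mem_affineSpan_pair ℝ X Y)
        (left_mem_affineSpan_pair ℝ X Y))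
    simpa [PiLp.inner_apply, Fin.sum_univ_two] using this

theorem reflect_spec (X Y P : Pt) :
    (lineReflect X Y P 0 - P 0)*(X 0 - Y 0) + (lineReflect X Y P 1 - P 1)*(X 1 - Y 1) = 0 ∧
    (lineReflect X Y P 0 + P 0 - 2*X 0)*(X 1 - Y 1)
      - (lineReflect X Y P 1 + P 1 - 2*X 1)*(X 0 - Y 0) = 0 := by
  obtain ⟨t, h0, h1, h⟩ := pedal_spec P X Y
  have hr : lineReflect X Y P = pedal P X Y - P + pedal P X Y := by
    unfold lineReflect pedal
    rw [reflection_apply']; rfl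
  have r0 : lineReflect X Y P 0 = 2 * pedal P X Y 0 - P 0 := by rw [hr]; simp; ring
  have r1 : lineReflect X Y P 1 = 2 * pedal P X Y 1 - P 1 := by rw [hr]; simp; ring
  rw [r0, r1]
  constructor
  · linear_combination 2*h
  · linear_combination 2*(X 1 - Y 1)*h0 - 2*(X 0 - Y 0)*h1

theorem ortho_spec (A B C : Pt) (h : AffineIndependent ℝ ![A, B, C]) :
    (orthocenter3 A B C h 0 - A 0)*(B 0 - C 0) + (orthocenter3 A B C h 1 - A 1)*(B 1 - C 1) = 0 ∧
    (orthocenter3 A B C h 0 - B 0)*(A 0 - C 0) + (orthocenter3 A B C h 1 - B 1)*(A 1 - C 1) = 0 := by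
  have key := fun i j => Affine.Simplex.inner_mongePoint_vsub_face_centroid_vsub
    (⟨![A, B, C], h⟩ : Affine.Triangle ℝ Pt) (i₁ := i) (i₂ := j)
  constructor
  · have := key 1 2
    rw [show ({1, 2}ᶜ : Finset (Fin 3)) = {0} by decide, Finset.centroid_singleton] at this
    simp [PiLp.inner_apply, Fin.sum_univ_two] at this
    unfold orthocenter3 Affine.Triangle.orthocenter
    linear_combination this
  · have := key 0 2
    rw [show ({0, 2}ᶜ : Finset (Fin 3)) = {1} by decide, Finset.centroid_singleton] at this
    simp [PiLp.inner_apply, Fin.sum_univ_two] at this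
    unfold orthocenter3 Affine.Triangle.orthocenter
    linear_combination this

theorem dist_sq2 (X Y : Pt) : dist X Y ^ 2 = (X 0 - Y 0)^2 + (X 1 - Y 1)^2 := by
  rw [EuclideanSpace.dist_sq_eq]
  simp [Fin.sum_univ_two, Real.dist_eq, sq_abs]

theorem sumsq0 {u v : ℝ} (h : u^2+v^2=0) : u = 0 ∧ v = 0 := by
  constructor <;> nlinarith [sq_nonneg u, sq_nonneg v]

set_option maxHeartbeats 1000000 in
/-- The reflection of the orthocenter in `B'C'` lies on the perpendicular from `P` to `BC`. -/
theorem key (A B C P : Pt) (hABC : AffineIndependent ℝ ![A, B, C])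
    (h : AffineIndependent ℝ ![pedal P A (incenter3 A B C), pedal P B (incenter3 A B C),
      pedal P C (incenter3 A B C)]) (K : Pt)
    (hK : K = lineReflect (pedal P B (incenter3 A B C)) (pedal P C (incenter3 A B C))
      (orthocenter3 _ _ _ h)) :
    (K 0 - P 0)*(C 0 - B 0) + (K 1 - P 1)*(C 1 - B 1) = 0 := by
  have hcr := indep_cross hABC
  have hcr' := indep_cross h
  obtain ⟨ho1, ho2⟩ := ortho_spec _ _ _ h
  obtain ⟨hr1, hr2⟩ := reflect_spec (pedal P B (incenter3 A B C)) (pedal P C (incenter3 A B C))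
      (orthocenter3 _ _ _ h)
  rw [← hK] at hr1 hr2
  obtain ⟨ta, ha0, ha1, ha2⟩ := pedal_spec P A (incenter3 A B C)
  obtain ⟨tb, hb0, hb1, hb2⟩ := pedal_spec P B (incenter3 A B C)
  obtain ⟨tc, hc0, hc1, hc2⟩ := pedal_spec P C (incenter3 A B C)
  generalize orthocenter3 _ _ _ h = H at *
  generalize hI : incenter3 A B C = I at *
  clear h hK
  generalize pedal P A I = A' at *
  generalize pedal P B I = B' at *
  generalize pedal P C I = C' at *
  have hBC : B ≠ C := by rintro rfl; apply hcr; ring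
  have hCA : C ≠ A := by rintro rfl; apply hcr; ring
  have hAB : A ≠ B := by rintro rfl; apply hcr; ring
  have hap := dist_pos.2 hBC
  have hbp := dist_pos.2 hCA
  have hcp := dist_pos.2 hAB
  have had := dist_sq2 B C
  have hbd := dist_sq2 C A
  have hcd := dist_sq2 A B
  have hs : dist B C + dist C A + dist A B ≠ 0 := by positivity
  have hI0 : (dist B C + dist C A + dist A B) * I 0
      = dist B C * A 0 + dist C A * B 0 + dist A B * C 0 := by
    rw [← hI]; simp [incenter3]; field_simp
  have hI1 : (dist B C + dist C A + dist A B) * I 1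
      = dist B C * A 1 + dist C A * B 1 + dist A B * C 1 := by
    rw [← hI]; simp [incenter3]; field_simp
  clear hI hABC hBC hCA hAB
  generalize dist B C = a at *
  generalize dist C A = b at *
  generalize dist A B = c at *
  have e : ∀ r y : ℝ, 0 < r → ∃ u, y = r * u := fun r y hr => ⟨y / r, by field_simp⟩
  obtain ⟨a1, ea1⟩ := e a (C 0 - B 0) hap
  obtain ⟨a2, ea2⟩ := e a (C 1 - B 1) hap
  obtain ⟨b1, eb1⟩ := e b (A 0 - C 0) hbp
  obtain ⟨b2, eb2⟩ := e b (A 1 - C 1) hbp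
  obtain ⟨c1, ec1⟩ := e c (B 0 - A 0) hcp
  obtain ⟨c2, ec2⟩ := e c (B 1 - A 1) hcp
  have ua : a1^2 + a2^2 = 1 := by
    apply mul_left_cancel₀ (pow_ne_zero 2 hap.ne')
    linear_combination -had - (C 0 - B 0 + a * a1) * ea1 - (C 1 - B 1 + a*a2) * ea2
  have ub : b1^2 + b2^2 = 1 := by
    apply mul_left_cancel₀ (pow_ne_zero 2 hbp.ne')
    linear_combination -hbd - (A 0 - C 0 + b * b1) * eb1 - (A 1 - C 1 + b*b2) * eb2
  have uc : c1^2 + c2^2 = 1 := by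
    apply mul_left_cancel₀ (pow_ne_zero 2 hcp.ne')
    linear_combination -hcd - (B 0 - A 0 + c * c1) * ec1 - (B 1 - A 1 + c*c2) * ec2
  have nbc : b1*c2 - b2*c1 ≠ 0 := by
    intro h0; apply hcr
    linear_combination (B 1 - A 1) * eb1 + b*b1*ec2 - (B 0 - A 0)*eb2 - b*b2*ec1 + b*c*h0
  have nca : c1*a2 - c2*a1 ≠ 0 := by
    intro h0; apply hcr
    linear_combination (C 1 - B 1) * ec1 + c*c1*ea2 - (C 0 - B 0)*ec2 - c*c2*ea1 + c*a*h0
  have nab : a1*b2 - a2*b1 ≠ 0 := by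
    intro h0; apply hcr
    linear_combination (A 1 - C 1) * ea1 + a*a1*eb2 - (A 0 - C 0)*ea2 - a*a2*eb1 + a*b*h0
  obtain ⟨x1, x2⟩ := footf (m := b*c) (s := a+b+c) ub uc nbc (by positivity) hs
    (by linear_combination -hI0 + c*eb1 - b*ec1) (by linear_combination -hI1 + c*eb2 - b*ec2)
    ha0 ha1 ha2
  obtain ⟨y1, y2⟩ := footf (m := c*a) (s := a+b+c) uc ua nca (by positivity) hs
    (by linear_combination -hI0 + a*ec1 - c*ea1) (by linear_combination -hI1 + a*ec2 - c*ea2)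
    hb0 hb1 hb2
  obtain ⟨z1, z2⟩ := footf (m := a*b) (s := a+b+c) ua ub nab (by positivity) hs
    (by linear_combination -hI0 + b*ea1 - a*eb1) (by linear_combination -hI1 + b*ea2 - a*eb2)
    hc0 hc1 hc2
  have y1' : 2*(B' 0 - I 0) = (P 0 - I 0) - ((a1*c1-a2*c2)*(P 0 - I 0)+(a1*c2+a2*c1)*(P 1 - I 1)) := by
    linear_combination y1
  have y2' : 2*(B' 1 - I 1) = (P 1 - I 1) - ((a1*c2+a2*c1)*(P 0 - I 0)-(a1*c1-a2*c2)*(P 1 - I 1)) := by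
    linear_combination y2
  obtain ⟨o1, o2⟩ := orthf (h1 := H 0 - I 0) (h2 := H 1 - I 1) ua ub uc x1 x2 y1' y2' z1 z2
    (by intro h0; apply hcr'; linear_combination h0)
    (by linear_combination ho1) (by linear_combination ho2)
  have fin := reflf (k1 := K 0 - I 0) (k2 := K 1 - I 1) ua ub uc x1 x2 y1' y2' z1 z2
    (by
      intro h0; apply hcr'
      obtain ⟨g1, g2⟩ := sumsq0 (show (B' 0 - C' 0)^2 + (B' 1 - C' 1)^2 = 0 by linear_combination h0)
      rw [g1, g2]; ring)
    o1 o2 (by linear_combination hr1) (by linear_combination hr2)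
  rw [ea1, ea2]
  linear_combination a * fin

/-- A point on the line `BC` at distance `x` from the foot of the perpendicular. -/
theorem dist_aux (B C P K AP X Y : Pt) (hAP : AP = pedal P B C) (hBC : B ≠ C)
    (hK : (K 0 - P 0)*(C 0 - B 0) + (K 1 - P 1)*(C 1 - B 1) = 0)
    (hY : Y = B ∨ Y = C) (hne : AP ≠ Y)
    (hs : SameRay ℝ (Y -ᵥ AP) (X -ᵥ AP)) :
    dist K X ^ 2 = dist K AP ^ 2 + dist AP X ^ 2 := by
  obtain ⟨t, h0, h1, h2⟩ := pedal_spec P B C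
  rw [← hAP] at h0 h1 h2
  obtain ⟨r, -, hr⟩ := hs.exists_nonneg_left (vsub_ne_zero.2 hne.symm)
  have r0 : r * (Y 0 - AP 0) = X 0 - AP 0 := by simpa using congrArg (fun v : Pt => v 0) hr
  have r1 : r * (Y 1 - AP 1) = X 1 - AP 1 := by simpa using congrArg (fun v : Pt => v 1) hr
  have hX : ∃ q, X 0 - AP 0 = q * (C 0 - B 0) ∧ X 1 - AP 1 = q * (C 1 - B 1) := by
    rcases hY with rfl | rfl
    · exact ⟨-r*t, by linear_combination -r0 - r*h0, by linear_combination -r1 - r*h1⟩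
    · exact ⟨r*(1-t), by linear_combination -r0 - r*h0, by linear_combination -r1 - r*h1⟩
  obtain ⟨q, q0, q1⟩ := hX
  rw [dist_sq2, dist_sq2, dist_sq2]
  linear_combination (-2*q)*(hK+h2) - 2*(K 0 - AP 0)*q0 - 2*(K 1 - AP 1)*q1

theorem stmt5 (A B C I P AP BP CP A' B' C' A1 A2 B1 B2 C1 C2 H' Q1 Q2 : Pt) (x : ℝ)
    (hABC : AffineIndependent ℝ ![A, B, C])
    (hI : I = incenter3 A B C)
    (hAP : AP = pedal P B C) (hBP : BP = pedal P C A) (hCP : CP = pedal P A B)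
    (hA' : A' = pedal P A I) (hB' : B' = pedal P B I) (hC' : C' = pedal P C I)
    (hAPB : AP ≠ B) (hAPC : AP ≠ C) (hBPC : BP ≠ C) (hBPA : BP ≠ A)
    (hCPA : CP ≠ A) (hCPB : CP ≠ B)
    (hx : 0 < x)
    (hA1 : SameRay ℝ (C -ᵥ AP) (A1 -ᵥ AP))
    (hB1 : SameRay ℝ (A -ᵥ BP) (B1 -ᵥ BP))
    (hC1 : SameRay ℝ (B -ᵥ CP) (C1 -ᵥ CP))
    (hA2 : SameRay ℝ (B -ᵥ AP) (A2 -ᵥ AP))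
    (hB2 : SameRay ℝ (C -ᵥ BP) (B2 -ᵥ BP))
    (hC2 : SameRay ℝ (A -ᵥ CP) (C2 -ᵥ CP))
    (hdA1 : dist AP A1 = x) (hdA2 : dist AP A2 = x)
    (hdB1 : dist BP B1 = x) (hdB2 : dist BP B2 = x)
    (hdC1 : dist CP C1 = x) (hdC2 : dist CP C2 = x)

    (hA'B'C' : AffineIndependent ℝ ![A', B', C'])
    (hH' : H' = orthocenter3 A' B' C' hA'B'C')
    (hQ1a : lineReflect B' C' Q1 = A1) (hQ1b : lineReflect C' A' Q1 = B1)
    (hQ1c : lineReflect A' B' Q1 = C1)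
    (hQ2a : lineReflect B' C' Q2 = A2) (hQ2b : lineReflect C' A' Q2 = B2)
    (hQ2c : lineReflect A' B' Q2 = C2) :
    dist H' Q1 = dist H' Q2 := by
  subst hI hA' hB' hC' hH'
  have hBC : B ≠ C := by
    rintro rfl; apply indep_cross hABC; ring
  have hk := key A B C P hABC hA'B'C' _ rfl
  have d : ∀ Q X : Pt, lineReflect (pedal P B (incenter3 A B C)) (pedal P C (incenter3 A B C)) Q = X →
      dist (orthocenter3 _ _ _ hA'B'C') Q = dist (lineReflect (pedal P B (incenter3 A B C))
        (pedal P C (incenter3 A B C)) (orthocenter3 _ _ _ hA'B'C')) X := by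
    rintro Q X rfl
    exact (AffineIsometryEquiv.dist_map _ _ _).symm
  rw [d _ _ hQ1a, d _ _ hQ2a, ← sq_eq_sq₀ dist_nonneg dist_nonneg,
    dist_aux B C P _ AP A1 C hAP hBC hk (Or.inr rfl) hAPC hA1,
    dist_aux B C P _ AP A2 B hAP hBC hk (Or.inl rfl) hAPB hA2, hdA1, hdA2]


end
end

section
/- Let ABC be a triangle with circumcenter O, let l be a line (the affine span of two distinct points), and let T be the orthogonal projection of O onto l. Let R, S, R₂, S₂ be points on l with dist(T,R) = dist(T,S) and dist(T,R₂) = dist(T,S₂). Let R', S', R₂', S₂' be the isogonal conjugates of R, S, R₂, S₂ with respect to ABC, i.e., the circumcenters of their reflection triangles (assume the reflections of each of R, S, R₂, S₂ in the lines BC, CA, AB are affinely independent). Then the segments S'R' and S₂'R₂' are parallel: there exists c : ℝ with S' −ᵥ R' = c • (S₂' −ᵥ R₂') or S₂' −ᵥ R₂' = c • (S' −ᵥ R'). -/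
open EuclideanGeometry

noncomputable section

lemma step {a b c a' b' c' r p p' q q' pa pa' pb pb' : ℂ} (hr : r ≠ 0)
  (ha : a * a' = r) (hb : b * b' = r) (hc : c * c' = r) (hab : a ≠ b)
  (h1 : r * pa = r * (b + c) - b * c * p') (h1' : r * pa' = r * (b' + c') - b' * c' * p)
  (h2 : r * pb = r * (c + a) - c * a * p') (h2' : r * pb' = r * (c' + a') - c' * a' * p)
  (h : (q - pa) * (q' - pa') = (q - pb) * (q' - pb')) :
  r ^ 2 * c * (q - c) * (c - p) = a * b * c * (c * q' - r) * (r - c * p') := by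
  have ha0 : a ≠ 0 := by rintro rfl; simp at ha; exact hr ha.symm
  have hb0 : b ≠ 0 := by rintro rfl; simp at hb; exact hr hb.symm
  have hc0 : c ≠ 0 := by rintro rfl; simp at hc; exact hr hc.symm
  obtain rfl : a' = r / a := by rw [eq_div_iff ha0]; linear_combination ha
  obtain rfl : b' = r / b := by rw [eq_div_iff hb0]; linear_combination hb
  obtain rfl : c' = r / c := by rw [eq_div_iff hc0]; linear_combination hc
  obtain rfl : pa = (b + c) - b * c * p' / r := by field_simp; linear_combination h1
  obtain rfl : pb = (c + a) - c * a * p' / r := by field_simp; linear_combination h2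
  obtain rfl : pa' = r / b + r / c - r * p / (b * c) := by
    apply mul_left_cancel₀ hr; rw [h1']; field_simp
  obtain rfl : pb' = r / c + r / a - r * p / (c * a) := by
    apply mul_left_cancel₀ hr; rw [h2']; field_simp
  have hs := sub_ne_zero.mpr hab
  apply mul_left_cancel₀ hs
  field_simp at h
  linear_combination (-c) * h

lemma coreE {a b c r p p' q q' : ℂ} (ha : a ≠ 0) (hb : b ≠ 0) (hab : a ≠ b)
  (h1 : r ^ 2 * a * (q - a) * (a - p) = a * b * c * (a * q' - r) * (r - a * p'))
  (h2 : r ^ 2 * b * (q - b) * (b - p) = a * b * c * (b * q' - r) * (r - b * p')) :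
  r ^ 2 * (p + q) + a * b * c * p' * q' = r ^ 2 * (a + b + c) := by
  have hs := sub_ne_zero.mpr hab
  apply mul_left_cancel₀ hs
  apply mul_left_cancel₀ ha
  apply mul_left_cancel₀ hb
  linear_combination b * h1 - a * h2

lemma coreN {a b c a' b' c' r p p' pa pa' pb pb' pc pc' : ℂ} (hr : r ≠ 0)
  (ha : a * a' = r) (hb : b * b' = r) (hc : c * c' = r)
  (h1 : r * pa = r * (b + c) - b * c * p') (h1' : r * pa' = r * (b' + c') - b' * c' * p)
  (h2 : r * pb = r * (c + a) - c * a * p') (h2' : r * pb' = r * (c' + a') - c' * a' * p)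
  (h3 : r * pc = r * (a + b) - a * b * p') (h3' : r * pc' = r * (a' + b') - a' * b' * p)
  (h : r = p * p') :
  (pa - pb) * (pa' - pc') - (pa' - pb') * (pa - pc) = 0 := by
  have ha0 : a ≠ 0 := by rintro rfl; simp at ha; exact hr ha.symm
  have hb0 : b ≠ 0 := by rintro rfl; simp at hb; exact hr hb.symm
  have hc0 : c ≠ 0 := by rintro rfl; simp at hc; exact hr hc.symm
  obtain rfl : a' = r / a := by rw [eq_div_iff ha0]; linear_combination ha
  obtain rfl : b' = r / b := by rw [eq_div_iff hb0]; linear_combination hb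
  obtain rfl : c' = r / c := by rw [eq_div_iff hc0]; linear_combination hc
  obtain rfl : pa = (b + c) - b * c * p' / r := by field_simp; linear_combination h1
  obtain rfl : pb = (c + a) - c * a * p' / r := by field_simp; linear_combination h2
  obtain rfl : pc = (a + b) - a * b * p' / r := by field_simp; linear_combination h3
  obtain rfl : pa' = r / b + r / c - r * p / (b * c) := by
    apply mul_left_cancel₀ hr; rw [h1']; field_simp
  obtain rfl : pb' = r / c + r / a - r * p / (c * a) := by
    apply mul_left_cancel₀ hr; rw [h2']; field_simp
  obtain rfl : pc' = r / a + r / b - r * p / (a * b) := by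
    apply mul_left_cancel₀ hr; rw [h3']; field_simp
  subst h
  have hp : p ≠ 0 := left_ne_zero_of_mul hr
  have hp' : p' ≠ 0 := right_ne_zero_of_mul hr
  field_simp
  ring

lemma coreQ {a b c a' b' c' r p p' q q' : ℂ} (hr : r ≠ 0)
  (ha : a * a' = r) (hb : b * b' = r) (hc : c * c' = r)
  (h : r ^ 2 * (p + q) + a * b * c * p' * q' = r ^ 2 * (a + b + c))
  (h' : r ^ 2 * (p' + q') + a' * b' * c' * p * q = r ^ 2 * (a' + b' + c')) :
  r * (r - p * p') * q = r ^ 2 * (a + b + c) - r ^ 2 * p - r * (a * b + b * c + c * a) * p'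
    + a * b * c * p' ^ 2 := by
  have ha0 : a ≠ 0 := by rintro rfl; simp at ha; exact hr ha.symm
  have hb0 : b ≠ 0 := by rintro rfl; simp at hb; exact hr hb.symm
  have hc0 : c ≠ 0 := by rintro rfl; simp at hc; exact hr hc.symm
  obtain rfl : a' = r / a := by rw [eq_div_iff ha0]; linear_combination ha
  obtain rfl : b' = r / b := by rw [eq_div_iff hb0]; linear_combination hb
  obtain rfl : c' = r / c := by rw [eq_div_iff hc0]; linear_combination hc
  field_simp at h'
  apply mul_left_cancel₀ hr
  linear_combination r * h - r * p' * h'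

lemma coreR {b c b' c' r p p' x f f' t : ℂ} (hr : r ≠ 0)
  (hb : b * b' = r) (hc : c * c' = r) (hbc : b ≠ c)
  (hf : f = b + t * (c - b)) (hf' : f' = b' + t * (c' - b'))
  (ho : (f - p) * (c' - b') + (f' - p') * (c - b) = 0)
  (hx : x = 2 * f - p) :
  r * x = r * (b + c) - b * c * p' := by
  have hb0 : b ≠ 0 := by rintro rfl; simp at hb; exact hr hb.symm
  have hc0 : c ≠ 0 := by rintro rfl; simp at hc; exact hr hc.symm
  obtain rfl : b' = r / b := by rw [eq_div_iff hb0]; linear_combination hb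
  obtain rfl : c' = r / c := by rw [eq_div_iff hc0]; linear_combination hc
  subst hf hf' hx
  have hs := sub_ne_zero.mpr hbc
  apply mul_left_cancel₀ hs
  field_simp at ho
  linear_combination ho

/-- Complex coordinate of `X` with origin `O`. -/
def zc (O X : Pt) : ℂ := ⟨X 0 - O 0, X 1 - O 1⟩

lemma dist_sq_coord (X Y : Pt) : dist X Y ^ 2 = (X 0 - Y 0) ^ 2 + (X 1 - Y 1) ^ 2 := by
  rw [EuclideanSpace.dist_eq, Real.sq_sqrt (by positivity)]
  simp [Real.dist_eq, sq_abs]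

lemma zc_sub_norm (O X Y : Pt) : (zc O X - zc O Y) * (starRingEnd ℂ (zc O X) - starRingEnd ℂ (zc O Y))
    = ((dist X Y ^ 2 : ℝ) : ℂ) := by
  rw [dist_sq_coord]
  apply Complex.ext
  · rw [Complex.ofReal_re]; simp [zc]; ring
  · rw [Complex.ofReal_im]; simp [zc]; ring

lemma zc_norm (O X : Pt) : zc O X * starRingEnd ℂ (zc O X) = ((dist X O ^ 2 : ℝ) : ℂ) := by
  rw [dist_sq_coord]
  apply Complex.ext
  · rw [Complex.ofReal_re]; simp [zc]; ring
  · rw [Complex.ofReal_im]; simp [zc]; ring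

lemma zc_inj {O X Y : Pt} (h : zc O X = zc O Y) : X = Y := by
  have h0 := congrArg Complex.re h
  have h1 := congrArg Complex.im h
  simp [zc] at h0 h1
  ext i; fin_cases i <;> simp [h0, h1]

lemma circ_eq (A B C : Pt) (h : AffineIndependent ℝ ![A, B, C]) :
    dist A (circumcenter3 A B C h) = circumradius3 A B C h ∧
    dist B (circumcenter3 A B C h) = circumradius3 A B C h ∧
    dist C (circumcenter3 A B C h) = circumradius3 A B C h :=
  ⟨(⟨![A, B, C], h⟩ : Affine.Triangle ℝ Pt).dist_circumcenter_eq_circumradius 0,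
   (⟨![A, B, C], h⟩ : Affine.Triangle ℝ Pt).dist_circumcenter_eq_circumradius 1,
   (⟨![A, B, C], h⟩ : Affine.Triangle ℝ Pt).dist_circumcenter_eq_circumradius 2⟩

lemma proj_facts (P X Y : Pt) : (∃ t : ℝ, (pedal P X Y) 0 = X 0 + t * (Y 0 - X 0) ∧
    (pedal P X Y) 1 = X 1 + t * (Y 1 - X 1)) ∧
    ((pedal P X Y) 0 - P 0) * (Y 0 - X 0) + ((pedal P X Y) 1 - P 1) * (Y 1 - X 1) = 0 := by
  constructor
  · have h : pedal P X Y ∈ affineSpan ℝ ({X, Y} : Set Pt) :=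
      EuclideanGeometry.orthogonalProjection_mem P
    obtain ⟨t, ht⟩ := mem_affineSpan_pair_iff_exists_lineMap_eq.1 h
    refine ⟨t, ?_, ?_⟩ <;> rw [← ht] <;> simp [AffineMap.lineMap_apply] <;> ring
  · have h := EuclideanGeometry.orthogonalProjection_vsub_mem_direction_orthogonal
      (affineSpan ℝ ({X, Y} : Set Pt)) P
    rw [Submodule.mem_orthogonal] at h
    have h2 := h (Y -ᵥ X) (AffineSubspace.vsub_mem_direction
      (right_mem_affineSpan_pair ℝ X Y) (left_mem_affineSpan_pair ℝ X Y))
    simp [PiLp.inner_apply, Fin.sum_univ_two] at h2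
    simp only [pedal]
    linarith

lemma lineReflect_eq (X Y P : Pt) : lineReflect X Y P = (2 : ℝ) • pedal P X Y - P := by
  have h : lineReflect X Y P = (pedal P X Y -ᵥ P) +ᵥ pedal P X Y := by
    unfold lineReflect pedal
    rw [EuclideanGeometry.reflection_apply']
  rw [h]; ext i; simp; ring

lemma refl_formula (O B C P : Pt) (r : ℝ) (hr : r ≠ 0) (hB : dist B O ^ 2 = r)
    (hC : dist C O ^ 2 = r) (hBC : B ≠ C) :
    (r : ℂ) * zc O (lineReflect B C P) = r * (zc O B + zc O C) -
      zc O B * zc O C * starRingEnd ℂ (zc O P) := by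
  obtain ⟨⟨t, h0, h1⟩, h2⟩ := proj_facts P B C
  refine coreR (c' := starRingEnd ℂ (zc O C)) (b' := starRingEnd ℂ (zc O B)) (p := zc O P)
    (f := zc O (pedal P B C)) (f' := starRingEnd ℂ (zc O (pedal P B C))) (t := t)
    (by exact_mod_cast hr) (by rw [zc_norm, hB]) (by rw [zc_norm, hC])
    (fun h => hBC (zc_inj h)) ?_ ?_ ?_ ?_
  · apply Complex.ext <;> simp [zc, h0, h1] <;> ring
  · apply Complex.ext <;> simp [zc, h0, h1] <;> ring
  · apply Complex.ext <;> simp [zc]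
    · linear_combination 2 * h2
    · ring
  · rw [lineReflect_eq]
    apply Complex.ext <;> simp [zc] <;> ring

lemma cross_ne (O X Y Z : Pt) (h : AffineIndependent ℝ ![X, Y, Z]) :
    (zc O X - zc O Y) * (starRingEnd ℂ (zc O X) - starRingEnd ℂ (zc O Z)) -
    (starRingEnd ℂ (zc O X) - starRingEnd ℂ (zc O Y)) * (zc O X - zc O Z) ≠ 0 := by
  intro hz
  have hi := congrArg Complex.im hz
  simp [zc] at hi
  have hi2 : (Y 0 - X 0) * (Z 1 - X 1) - (Y 1 - X 1) * (Z 0 - X 0) = 0 := by linarith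
  rw [affineIndependent_iff_not_collinear_set] at h
  apply h
  rw [collinear_iff_of_mem (p₀ := X) (by simp)]
  by_cases hY : Y = X
  · subst hY
    refine ⟨Z -ᵥ Y, ?_⟩
    intro p hp
    simp at hp
    rcases hp with rfl | rfl
    · exact ⟨0, by simp⟩
    · exact ⟨1, by simp⟩
  · refine ⟨Y -ᵥ X, ?_⟩
    intro p hp
    simp at hp
    rcases hp with rfl | rfl | rfl
    · exact ⟨0, by simp⟩
    · exact ⟨1, by simp⟩
    · by_cases h0 : Y 0 - X 0 = 0
      · have h1 : Y 1 - X 1 ≠ 0 := by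
          intro h1
          apply hY
          ext i; fin_cases i <;> simp <;> linarith
        refine ⟨(p 1 - X 1) / (Y 1 - X 1), ?_⟩
        ext i; fin_cases i <;> simp <;> field_simp <;> linarith
      · refine ⟨(p 0 - X 0) / (Y 0 - X 0), ?_⟩
        ext i; fin_cases i <;> simp <;> field_simp <;> linarith

lemma isog (A B C O P Q : Pt) (r : ℝ) (hr : r ≠ 0) (hA : dist A O ^ 2 = r)
    (hB : dist B O ^ 2 = r) (hC : dist C O ^ 2 = r) (hAB : A ≠ B) (hBC : B ≠ C) (hCA : C ≠ A)
    (hP : AffineIndependent ℝ ![lineReflect B C P, lineReflect C A P, lineReflect A B P])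
    (hQ : Q = circumcenter3 (lineReflect B C P) (lineReflect C A P) (lineReflect A B P) hP) :
    r - dist P O ^ 2 ≠ 0 ∧
    ((r * (r - dist P O ^ 2) : ℝ) : ℂ) * zc O Q = r ^ 2 * (zc O A + zc O B + zc O C)
      - r ^ 2 * zc O P - r * (zc O A * zc O B + zc O B * zc O C + zc O C * zc O A)
        * starRingEnd ℂ (zc O P)
      + zc O A * zc O B * zc O C * starRingEnd ℂ (zc O P) ^ 2 := by
  obtain ⟨d1, d2, d3⟩ := circ_eq _ _ _ hP
  rw [← hQ] at d1 d2 d3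
  have hrC : (r : ℂ) ≠ 0 := by exact_mod_cast hr
  have ha := zc_norm O A
  have hb := zc_norm O B
  have hc := zc_norm O C
  rw [hA] at ha
  rw [hB] at hb
  rw [hC] at hc
  have f1 := refl_formula O B C P r hr hB hC hBC
  have f2 := refl_formula O C A P r hr hC hA hCA
  have f3 := refl_formula O A B P r hr hA hB hAB
  have f1' := congrArg (starRingEnd ℂ) f1
  have f2' := congrArg (starRingEnd ℂ) f2
  have f3' := congrArg (starRingEnd ℂ) f3
  simp only [map_mul, map_sub, map_add, Complex.conj_ofReal, Complex.conj_conj] at f1' f2' f3'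
  have e1 := zc_sub_norm O Q (lineReflect B C P)
  have e2 := zc_sub_norm O Q (lineReflect C A P)
  have e3 := zc_sub_norm O Q (lineReflect A B P)
  rw [dist_comm, d1] at e1
  rw [dist_comm, d2] at e2
  rw [dist_comm, d3] at e3
  have hab : zc O A ≠ zc O B := fun h => hAB (zc_inj h)
  have hbc : zc O B ≠ zc O C := fun h => hBC (zc_inj h)
  have hca : zc O C ≠ zc O A := fun h => hCA (zc_inj h)
  have s1 := step hrC hb hc ha hbc f2 f2' f3 f3' (e2.trans e3.symm)
  have s2 := step hrC hc ha hb hca f3 f3' f1 f1' (e3.trans e1.symm)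
  have ha0 : zc O A ≠ 0 := by intro h; rw [h, zero_mul] at ha; exact hrC ha.symm
  have hb0 : zc O B ≠ 0 := by intro h; rw [h, zero_mul] at hb; exact hrC hb.symm
  have E := coreE (c := zc O C) (p := zc O P) (q := zc O Q)
    (p' := starRingEnd ℂ (zc O P)) (q' := starRingEnd ℂ (zc O Q)) ha0 hb0 hab (s1.trans (by ring)) (s2.trans (by ring))
  have E' := congrArg (starRingEnd ℂ) E
  simp only [map_mul, map_add, map_pow, Complex.conj_ofReal, Complex.conj_conj] at E'
  have key := coreQ hrC ha hb hc E E'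
  have hp := zc_norm O P
  constructor
  · intro h0
    apply cross_ne O _ _ _ hP
    refine coreN hrC ha hb hc f1 f1' f2 f2' f3 f3' ?_
    rw [hp]; exact_mod_cast (sub_eq_zero.1 h0)
  · rw [← key, hp]; push_cast; ring

lemma line_coord (O U V T P : Pt) (hT : T = pedal O U V)
    (hP : P ∈ affineSpan ℝ ({U, V} : Set Pt)) :
    ∃ x : ℝ, P 0 = T 0 + x * (V 0 - U 0) ∧ P 1 = T 1 + x * (V 1 - U 1) := by
  obtain ⟨⟨t, h0, h1⟩, -⟩ := proj_facts O U V
  obtain ⟨s, hs⟩ := mem_affineSpan_pair_iff_exists_lineMap_eq.1 hP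
  rw [← hT] at h0 h1
  refine ⟨s - t, ?_, ?_⟩
  · rw [← hs, h0]; simp [AffineMap.lineMap_apply]; ring
  · rw [← hs, h1]; simp [AffineMap.lineMap_apply]; ring

lemma direction (A B C O U V T P S P' S' : Pt) (r : ℝ) (hr : r ≠ 0) (hA : dist A O ^ 2 = r)
    (hB : dist B O ^ 2 = r) (hC : dist C O ^ 2 = r) (hAB : A ≠ B) (hBC : B ≠ C) (hCA : C ≠ A)
    (hUV : U ≠ V) (hT : T = pedal O U V)
    (hPl : P ∈ affineSpan ℝ ({U, V} : Set Pt))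
    (hSl : S ∈ affineSpan ℝ ({U, V} : Set Pt))
    (hd : dist T P = dist T S)
    (hP : AffineIndependent ℝ ![lineReflect B C P, lineReflect C A P, lineReflect A B P])
    (hS : AffineIndependent ℝ ![lineReflect B C S, lineReflect C A S, lineReflect A B S])
    (hP' : P' = circumcenter3 (lineReflect B C P) (lineReflect C A P) (lineReflect A B P) hP)
    (hS' : S' = circumcenter3 (lineReflect B C S) (lineReflect C A S) (lineReflect A B S) hS) :
    ∃ k : ℝ, zc O S' - zc O P' = k * (- r ^ 2 * zc U V
      - r * (zc O A * zc O B + zc O B * zc O C + zc O C * zc O A) * starRingEnd ℂ (zc U V)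
      + 2 * (zc O A * zc O B * zc O C) * starRingEnd ℂ (zc O T) * starRingEnd ℂ (zc U V)) := by
  obtain ⟨x, hx0, hx1⟩ := line_coord O U V T P hT hPl
  obtain ⟨y, hy0, hy1⟩ := line_coord O U V T S hT hSl
  obtain ⟨-, ho⟩ := proj_facts O U V
  rw [← hT] at ho
  have hUV2 : (V 0 - U 0) ^ 2 + (V 1 - U 1) ^ 2 ≠ 0 := by
    intro h
    have h0 : V 0 - U 0 = 0 := by nlinarith [sq_nonneg (V 0 - U 0), sq_nonneg (V 1 - U 1)]
    have h1 : V 1 - U 1 = 0 := by nlinarith [sq_nonneg (V 0 - U 0), sq_nonneg (V 1 - U 1)]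
    apply hUV
    ext i; fin_cases i <;> simp <;> linarith
  have hxy : x ^ 2 = y ^ 2 := by
    have h := congrArg (· ^ 2) hd
    simp only [dist_sq_coord, hx0, hx1, hy0, hy1] at h
    apply mul_right_cancel₀ hUV2
    linear_combination h
  have hPS : dist P O ^ 2 = dist S O ^ 2 := by
    simp only [dist_sq_coord, hx0, hx1, hy0, hy1]
    linear_combination ((V 0 - U 0) ^ 2 + (V 1 - U 1) ^ 2) * hxy + 2 * (x - y) * ho
  obtain ⟨n1, e1⟩ := isog A B C O P P' r hr hA hB hC hAB hBC hCA hP hP'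
  obtain ⟨n2, e2⟩ := isog A B C O S S' r hr hA hB hC hAB hBC hCA hS hS'
  rw [← hPS] at e2
  set m := r - dist P O ^ 2
  have zP : zc O P = zc O T + x * zc U V := by
    apply Complex.ext <;> simp [zc, hx0, hx1] <;> ring
  have zS : zc O S = zc O T + y * zc U V := by
    apply Complex.ext <;> simp [zc, hy0, hy1] <;> ring
  have hrm : ((r * m : ℝ) : ℂ) ≠ 0 := by exact_mod_cast mul_ne_zero hr n1
  have hxyC : (x : ℂ) ^ 2 = (y : ℂ) ^ 2 := by exact_mod_cast hxy
  refine ⟨(y - x) / (r * m), ?_⟩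
  apply mul_left_cancel₀ hrm
  rw [mul_sub, e1, e2, zP, zS]
  have : ((((y - x) / (r * m) : ℝ)) : ℂ) = (y - x) / ((r * m : ℝ) : ℂ) := by push_cast; rfl
  rw [this, ← mul_assoc, mul_div_cancel₀ _ hrm]
  simp only [map_add, map_mul, Complex.conj_ofReal]
  linear_combination (-(zc O A * zc O B * zc O C) * starRingEnd ℂ (zc U V) ^ 2) * hxyC

theorem stmt10 (A B C O U V T R S R₂ S₂ R' S' R₂' S₂' : Pt)
    (hABC : AffineIndependent ℝ ![A, B, C])
    (hO : O = circumcenter3 A B C hABC)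
    (hUV : U ≠ V)
    (hT : T = pedal O U V)
    (hR : R ∈ affineSpan ℝ ({U, V} : Set Pt))
    (hS : S ∈ affineSpan ℝ ({U, V} : Set Pt))
    (hR₂ : R₂ ∈ affineSpan ℝ ({U, V} : Set Pt))
    (hS₂ : S₂ ∈ affineSpan ℝ ({U, V} : Set Pt))
    (hTR : dist T R = dist T S)
    (hTR₂ : dist T R₂ = dist T S₂)
    (hRind : AffineIndependent ℝ ![lineReflect B C R, lineReflect C A R, lineReflect A B R])
    (hSind : AffineIndependent ℝ ![lineReflect B C S, lineReflect C A S, lineReflect A B S])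
    (hR₂ind : AffineIndependent ℝ ![lineReflect B C R₂, lineReflect C A R₂, lineReflect A B R₂])
    (hS₂ind : AffineIndependent ℝ ![lineReflect B C S₂, lineReflect C A S₂, lineReflect A B S₂])
    (hR' : R' = circumcenter3 (lineReflect B C R) (lineReflect C A R) (lineReflect A B R) hRind)
    (hS' : S' = circumcenter3 (lineReflect B C S) (lineReflect C A S) (lineReflect A B S) hSind)
    (hR₂' : R₂' = circumcenter3 (lineReflect B C R₂) (lineReflect C A R₂) (lineReflect A B R₂) hR₂ind)
    (hS₂' : S₂' = circumcenter3 (lineReflect B C S₂) (lineReflect C A S₂) (lineReflect A B S₂) hS₂ind) :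
    ∃ c : ℝ, S' -ᵥ R' = c • (S₂' -ᵥ R₂') ∨ S₂' -ᵥ R₂' = c • (S' -ᵥ R') := by
  subst hO
  set O := circumcenter3 A B C hABC with hOdef
  obtain ⟨dA, dB, dC⟩ := circ_eq A B C hABC
  rw [← hOdef] at dA dB dC
  have hAB : A ≠ B := fun h => by simpa using hABC.injective (a₁ := 0) (a₂ := 1) h
  have hBC : B ≠ C := fun h => by simpa using hABC.injective (a₁ := 1) (a₂ := 2) h
  have hCA : C ≠ A := fun h => by simpa using hABC.injective (a₁ := 2) (a₂ := 0) h
  have hr : (circumradius3 A B C hABC) ^ 2 ≠ 0 := by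
    intro h
    rw [pow_eq_zero_iff two_ne_zero] at h
    rw [h, dist_eq_zero] at dA dB
    exact hAB (dA.trans dB.symm)
  obtain ⟨k, hk⟩ := direction A B C O U V T R S R' S' _ hr (by rw [dA]) (by rw [dB]) (by rw [dC])
    hAB hBC hCA hUV hT hR hS hTR hRind hSind hR' hS'
  obtain ⟨l, hl⟩ := direction A B C O U V T R₂ S₂ R₂' S₂' _ hr (by rw [dA]) (by rw [dB])
    (by rw [dC]) hAB hBC hCA hUV hT hR₂ hS₂ hTR₂ hR₂ind hS₂ind hR₂' hS₂'
  generalize (- ((circumradius3 A B C hABC ^ 2 : ℝ) : ℂ) ^ 2 * zc U V - _ + _ : ℂ) = W at hk hl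
  have hk0 := congrArg Complex.re hk
  have hk1 := congrArg Complex.im hk
  have hl0 := congrArg Complex.re hl
  have hl1 := congrArg Complex.im hl
  simp [zc] at hk0 hk1 hl0 hl1
  by_cases h : l = 0
  · refine ⟨0, Or.inr ?_⟩
    subst h
    ext i; fin_cases i <;> simp <;> linarith
  · refine ⟨k / l, Or.inl ?_⟩
    ext i; fin_cases i <;> simp
    · rw [hk0, hl0]; field_simp
    · rw [hk1, hl1]; field_simp


end
end

section
/- Let ABC be a triangle with incenter I and circumcenter O, and let Be be the Bevan point of ABC, i.e., the point reflection of I across O. Let A', B', C' be the pedals of Be on lines AI, BI, CI, and assume A', B', C' are affinely independent. Then the orthocenter of triangle A'B'C' is the Nagel point of ABC. -/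
open EuclideanGeometry

noncomputable section

/-- Explicit form of the pedal of the Bevan point on the bisector through `A`. -/
def pedPt (A B C : Pt) : Pt :=
  A + (dist B C / ((dist C A + dist A B) ^ 2 - dist B C ^ 2)) •
    (dist C A • (B - A) + dist A B • (C - A))

theorem gram_AB (A B : Pt) : inner ℝ (B - A) (B - A) = dist A B ^ 2 := by
  rw [real_inner_self_eq_norm_sq, dist_comm, dist_eq_norm]

theorem gram_AC (A C : Pt) : inner ℝ (C - A) (C - A) = dist C A ^ 2 := by
  rw [real_inner_self_eq_norm_sq, dist_eq_norm]

theorem gram_mix (A B C : Pt) :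
    inner ℝ (B - A) (C - A) = (dist C A ^ 2 + dist A B ^ 2 - dist B C ^ 2) / 2 := by
  have h : dist B C ^ 2 = inner ℝ ((B - A) - (C - A)) ((B - A) - (C - A)) := by
    rw [real_inner_self_eq_norm_sq, dist_eq_norm]
    congr 2
    abel
  rw [real_inner_sub_sub_self, gram_AB, gram_AC] at h
  linarith

theorem strict_tri (A B C : Pt) (h : AffineIndependent ℝ ![A, B, C]) :
    dist A C < dist A B + dist B C := by
  rw [dist_lt_dist_add_dist_iff]
  intro hw
  rw [affineIndependent_iff_not_collinear_set] at h
  exact h hw.collinear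

theorem rot_indep (A B C : Pt) (h : AffineIndependent ℝ ![A, B, C]) :
    AffineIndependent ℝ ![B, C, A] := by
  rw [affineIndependent_iff_not_collinear_set] at h ⊢
  have e : ({B, C, A} : Set Pt) = {A, B, C} := by
    ext x
    simp only [Set.mem_insert_iff, Set.mem_singleton_iff]
    tauto
  rwa [e]

theorem incenter_rot (A B C : Pt) : incenter3 B C A = incenter3 A B C := by
  unfold incenter3
  congr 1
  · congr 1
    ring
  · abel

theorem nagel_rot (A B C : Pt) : nagelPoint B C A = nagelPoint A B C := by
  unfold nagelPoint
  rw [show dist C A + dist A B + dist B C = dist B C + dist C A + dist A B by ring]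
  abel

theorem inner_comb (u v : Pt) (p q r s : ℝ) :
    inner ℝ (p • u + q • v) (r • u + s • v) =
      p * r * inner ℝ u u + (p * s + q * r) * inner ℝ u v + q * s * inner ℝ v v := by
  simp only [inner_add_left, inner_add_right, real_inner_smul_left, real_inner_smul_right,
    real_inner_comm u v]
  ring

theorem inner_circum (P A B : Pt) (h : dist A P = dist B P) :
    inner ℝ (P - A) (B - A) = dist A B ^ 2 / 2 := by
  have h1 : dist B P ^ 2 = inner ℝ ((P - A) - (B - A)) ((P - A) - (B - A)) := by
    rw [real_inner_self_eq_norm_sq, dist_comm, dist_eq_norm]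
    congr 2
    abel
  rw [real_inner_sub_sub_self, gram_AB, gram_AB, h] at h1
  linarith

theorem pedal_eq (A B C O : Pt) (h : AffineIndependent ℝ ![A, B, C])
    (hB : dist A O = dist B O) (hC : dist A O = dist C O) :
    pedal ((2 : ℝ) • O - incenter3 A B C) A (incenter3 A B C) = pedPt A B C := by
  have t1 := strict_tri A B C h
  have t2 := strict_tri B C A (rot_indep _ _ _ h)
  have t3 := strict_tri C A B (rot_indep _ _ _ (rot_indep _ _ _ h))
  have i1 := inner_circum O A B hB
  have i2 := inner_circum O A C hC
  have g1 := gram_AB A B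
  have g2 := gram_AC A C
  have g3 := gram_mix A B C
  rw [dist_comm A C] at t1 i2
  rw [dist_comm B A] at t2
  rw [dist_comm C B] at t3
  unfold pedal pedPt
  have hIA : incenter3 A B C - A = (dist B C + dist C A + dist A B)⁻¹ •
      (dist C A • (B - A) + dist A B • (C - A)) := by
    unfold incenter3
    have : (dist B C + dist C A + dist A B) ≠ 0 := by linarith
    match_scalars <;> field_simp <;> ring
  set I := incenter3 A B C with hI
  clear_value I
  generalize dist B C = a at *
  generalize dist C A = b at *
  generalize dist A B = c at *
  have ha : a + b + c ≠ 0 := by linarith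
  have hd : (b + c) ^ 2 - a ^ 2 ≠ 0 := by
    have : 0 < (b + c - a) * (a + b + c) := mul_pos (by linarith) (by linarith)
    nlinarith
  rw [EuclideanGeometry.coe_orthogonalProjection_eq_iff_mem]
  constructor
  · have : A + (a / ((b + c) ^ 2 - a ^ 2)) • (b • (B - A) + c • (C - A)) =
        AffineMap.lineMap A I (a * (a + b + c) / ((b + c) ^ 2 - a ^ 2)) := by
      rw [AffineMap.lineMap_apply, vsub_eq_sub, hIA, smul_smul, vadd_eq_add, add_comm]
      congr 2
      field_simp
    rw [this]
    exact AffineMap.lineMap_mem_affineSpan_pair _ _ _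
  · rw [direction_affineSpan, Submodule.mem_orthogonal]
    intro w hw
    rw [mem_vectorSpan_pair_rev] at hw
    obtain ⟨r, rfl⟩ := hw
    rw [vsub_eq_sub, vsub_eq_sub, real_inner_smul_left, hIA, real_inner_smul_left]
    have e : (2 : ℝ) • O - I - (A + (a / ((b + c) ^ 2 - a ^ 2)) • (b • (B - A) + c • (C - A)))
        = (2 : ℝ) • (O - A) - ((((a + b + c)⁻¹ + a / ((b + c) ^ 2 - a ^ 2)) * b) • (B - A)
          + (((a + b + c)⁻¹ + a / ((b + c) ^ 2 - a ^ 2)) * c) • (C - A)) := by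
      have : I = A + (a + b + c)⁻¹ • (b • (B - A) + c • (C - A)) := by
        rw [← hIA]; abel
      rw [this]
      module
    rw [e, inner_sub_right, inner_comb, g1, g2, g3, real_inner_smul_right, inner_add_left,
      real_inner_smul_left, real_inner_smul_left, real_inner_comm, i1, real_inner_comm, i2]
    have : (2 : ℝ) * (b * (c ^ 2 / 2) + c * (b ^ 2 / 2)) -
      (b * (((a + b + c)⁻¹ + a / ((b + c) ^ 2 - a ^ 2)) * b) * c ^ 2 +
        (b * (((a + b + c)⁻¹ + a / ((b + c) ^ 2 - a ^ 2)) * c) +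
          c * (((a + b + c)⁻¹ + a / ((b + c) ^ 2 - a ^ 2)) * b)) *
            ((b ^ 2 + c ^ 2 - a ^ 2) / 2) +
        c * (((a + b + c)⁻¹ + a / ((b + c) ^ 2 - a ^ 2)) * c) * b ^ 2) = 0 := by
      field_simp
      ring
    rw [this]
    ring

theorem alt_orth (A B C : Pt) (h : AffineIndependent ℝ ![A, B, C]) :
    inner ℝ (nagelPoint A B C - pedPt A B C) (pedPt B C A - pedPt C A B) = 0 := by
  have t1 := strict_tri A B C h
  have t2 := strict_tri B C A (rot_indep _ _ _ h)
  have t3 := strict_tri C A B (rot_indep _ _ _ (rot_indep _ _ _ h))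
  have g1 := gram_AB A B
  have g2 := gram_AC A C
  have g3 := gram_mix A B C
  rw [dist_comm A C] at t1
  rw [dist_comm B A] at t2
  rw [dist_comm C B] at t3
  unfold nagelPoint pedPt
  generalize dist B C = a at *
  generalize dist C A = b at *
  generalize dist A B = c at *
  obtain ⟨x, hx⟩ : ∃ x, x = b + c - a := ⟨_, rfl⟩
  obtain ⟨y, hy⟩ : ∃ y, y = c + a - b := ⟨_, rfl⟩
  obtain ⟨z, hz⟩ : ∃ z, z = a + b - c := ⟨_, rfl⟩
  have hx0 : x ≠ 0 := by linarith
  have hy0 : y ≠ 0 := by linarith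
  have hz0 : z ≠ 0 := by linarith
  have hs0 : x + y + z ≠ 0 := by linarith
  obtain rfl : a = (y + z) / 2 := by linarith
  obtain rfl : b = (x + z) / 2 := by linarith
  obtain rfl : c = (x + y) / 2 := by linarith
  clear hx hy hz t1 t2 t3
  set a := (y + z) / 2 with ha
  set b := (x + z) / 2 with hb
  set c := (x + y) / 2 with hc
  have ea : (b + c) ^ 2 - a ^ 2 = x * (x + y + z) := by rw [ha, hb, hc]; ring
  have eb : (c + a) ^ 2 - b ^ 2 = y * (x + y + z) := by rw [ha, hb, hc]; ring
  have ec : (a + b) ^ 2 - c ^ 2 = z * (x + y + z) := by rw [ha, hb, hc]; ring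
  have es : (a + b + c) / 2 = (x + y + z) / 2 := by rw [ha, hb, hc]; ring
  rw [ea, eb, ec, es]
  have e1 : (((x + y + z) / 2 - a) / ((x + y + z) / 2)) • A +
      (((x + y + z) / 2 - b) / ((x + y + z) / 2)) • B +
      (((x + y + z) / 2 - c) / ((x + y + z) / 2)) • C -
      (A + (a / (x * (x + y + z))) • (b • (B - A) + c • (C - A))) =
      (y / (x + y + z) - a * b / (x * (x + y + z))) • (B - A) +
      (z / (x + y + z) - a * c / (x * (x + y + z))) • (C - A) := by
    rw [ha, hb, hc]
    match_scalars <;> field_simp <;> ring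
  have e2 : (B + (b / (y * (x + y + z))) • (c • (C - B) + a • (A - B))) -
      (C + (c / (z * (x + y + z))) • (a • (A - C) + b • (B - C))) =
      (1 - b * (a + c) / (y * (x + y + z)) - c * b / (z * (x + y + z))) • (B - A) +
      (-1 + b * c / (y * (x + y + z)) + c * (a + b) / (z * (x + y + z))) • (C - A) := by
    match_scalars <;> field_simp <;> ring
  rw [e1, e2, inner_comb, g1, g2, g3]
  rw [ha, hb, hc]
  field_simp
  ring

theorem mem_alt (A B C P : Pt) (h : AffineIndependent ℝ ![A, B, C]) (i j k : Fin 3)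
    (hs : ({i}ᶜ : Set (Fin 3)) = {j, k})
    (ho : inner ℝ (P - ![A, B, C] i) (![A, B, C] j - ![A, B, C] k) = 0) :
    P ∈ (⟨![A, B, C], h⟩ : Affine.Triangle ℝ Pt).altitude i := by
  rw [Affine.Simplex.altitude_def, AffineSubspace.mem_inf_iff]
  constructor
  · rw [AffineSubspace.mem_mk', hs, Set.image_pair, direction_affineSpan,
      Submodule.mem_orthogonal]
    intro w hw
    rw [mem_vectorSpan_pair] at hw
    obtain ⟨r, rfl⟩ := hw
    rw [real_inner_smul_left, real_inner_comm]
    simp only [vsub_eq_sub]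
    rw [ho, mul_zero]
  · have : affineSpan ℝ (Set.range ![A, B, C]) = ⊤ := by
      rw [h.affineSpan_eq_top_iff_card_eq_finrank_add_one]
      simp
    simp only [this]
    exact AffineSubspace.mem_top _ _ _

theorem stmt13 (A B C I O Be A' B' C' : Pt)
    (hABC : AffineIndependent ℝ ![A, B, C])
    (hI : I = incenter3 A B C)
    (hO : O = circumcenter3 A B C hABC)
    (hBe : Be = (2 : ℝ) • O - I)
    (hA' : A' = pedal Be A I) (hB' : B' = pedal Be B I) (hC' : C' = pedal Be C I)
    (hA'B'C' : AffineIndependent ℝ ![A', B', C']) :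
    orthocenter3 A' B' C' hA'B'C' = nagelPoint A B C := by
  have hd : ∀ i, dist (![A, B, C] i) O = circumradius3 A B C hABC := by
    intro i
    rw [hO]
    exact (⟨![A, B, C], hABC⟩ : Affine.Triangle ℝ Pt).dist_circumcenter_eq_circumradius i
  have hdA : dist A O = circumradius3 A B C hABC := hd 0
  have hdB : dist B O = circumradius3 A B C hABC := hd 1
  have hdC : dist C O = circumradius3 A B C hABC := hd 2
  have r1 := rot_indep _ _ _ hABC
  have r2 := rot_indep _ _ _ r1
  have pA : A' = pedPt A B C := by
    rw [hA', hBe, hI]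
    exact pedal_eq A B C O hABC (hdA.trans hdB.symm) (hdA.trans hdC.symm)
  have pB : B' = pedPt B C A := by
    rw [hB', hBe, hI, ← incenter_rot A B C]
    exact pedal_eq B C A O r1 (hdB.trans hdC.symm) (hdB.trans hdA.symm)
  have pC : C' = pedPt C A B := by
    rw [hC', hBe, hI, ← incenter_rot A B C, ← incenter_rot B C A]
    exact pedal_eq C A B O r2 (hdC.trans hdA.symm) (hdC.trans hdB.symm)
  symm
  unfold orthocenter3
  refine Affine.Triangle.eq_orthocenter_of_forall_mem_altitude (i₁ := 0) (i₂ := 1)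
    (by decide) ?_ ?_
  · refine mem_alt _ _ _ _ _ 0 1 2 (by ext x; fin_cases x <;> simp) ?_
    change inner ℝ (nagelPoint A B C - A') (B' - C') = 0
    rw [pA, pB, pC]
    exact alt_orth A B C hABC
  · refine mem_alt _ _ _ _ _ 1 2 0 (by ext x; fin_cases x <;> simp) ?_
    change inner ℝ (nagelPoint A B C - B') (C' - A') = 0
    rw [pA, pB, pC, ← nagel_rot A B C]
    exact alt_orth B C A r1

end
end
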